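/- arXiv:2408.06238 — 2 statements merged into one kernel-verified Lean document; each statement's English description precedes it below -/
import Mathlib

section
/- Decomposition theorem for the Lagrangean dual: for every λ : Fin n → Fin ℓ → ℝ≥0 and η : Fin ℓ → Fin q → ℝ≥0, the dual function value satisfies g(λ, η) = Σ_{t,k} max(0, 1 − η t k) + Σ_{j,t} λ j t + max over subsets S ⊆ Fin n with |S| = p of Σ_{j ∈ S} ( Σ_{i,t} max(0, Σ_k η t k · M i j t k − λ j t) − f j / ℓ ). -/
/-!
With constraints (a) and (d) relaxed, the Lagrangean is linear with a separate reduced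
coefficient for each variable (`Lag_eq`): `1 - η t k` for `θ t k`,
`Σ_k η t k * M i j t k - λ j t` for `X i j t`, and `-f j / ℓ` for `Y j`, plus the constant
`Σ λ`. A variable ranging in `[0,1]` or `{0,1}` with coefficient `c` contributes at most
`max 0 c`, with equality at the indicator of `0 ≤ c`. The only coupling left is
`X i j t ≤ Y j` and `Σ Y = p`: once `S = {j | Y j = 1}` is fixed, pointings outside `S` vanish
and those in `S` are free, so the supremum is attained and reduces to a maximum over
`p`-subsets `S`.
-/

open Finset

namespace TEpMP

variable {m n ℓ q : ℕ}

/-- An admissible pair `(X, Y)`: binary allocation/location variables satisfying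
(a) each observer points in at most one direction at each time,
(b) exactly `p` facilities are used, and (c) allocations require existing facilities. -/
def Admissible (p : ℕ) (X : Fin m → Fin n → Fin ℓ → ℝ) (Y : Fin n → ℝ) : Prop :=
  (∀ i j t, X i j t = 0 ∨ X i j t = 1) ∧
  (∀ j, Y j = 0 ∨ Y j = 1) ∧
  (∀ j t, ∑ i, X i j t ≤ 1) ∧
  (∑ j, Y j = (p : ℝ)) ∧
  (∀ i j t, X i j t ≤ Y j)

/-- A feasible triple `(X, Y, θ)` of the slack-form TE-p-MP: `(X, Y)` admissible,
`θ` in the box `[0,1]`, and (d) the slack is dominated by the coverage. -/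
def Feasible (p : ℕ) (M : Fin m → Fin n → Fin ℓ → Fin q → ℝ)
    (X : Fin m → Fin n → Fin ℓ → ℝ) (Y : Fin n → ℝ) (θ : Fin ℓ → Fin q → ℝ) : Prop :=
  Admissible p X Y ∧
  (∀ t k, θ t k ∈ Set.Icc (0 : ℝ) 1) ∧
  (∀ t k, θ t k ≤ ∑ i, ∑ j, M i j t k * X i j t)

/-- The slack-form objective `Z(X,Y,θ) = Σ_{t,k} θ t k − (1/ℓ) Σ_j f j · Y j`. -/
noncomputable def Z (f : Fin n → ℝ) (Y : Fin n → ℝ) (θ : Fin ℓ → Fin q → ℝ) : ℝ :=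
  (∑ t, ∑ k, θ t k) - (1 / (ℓ : ℝ)) * ∑ j, f j * Y j

/-- The optimal value `Z*`, the supremum of `Z` over feasible triples. -/
noncomputable def Zstar (p : ℕ) (M : Fin m → Fin n → Fin ℓ → Fin q → ℝ)
    (f : Fin n → ℝ) : ℝ :=
  sSup { z : ℝ | ∃ X Y θ, Feasible p M X Y θ ∧ z = Z f Y θ }

/-- The Lagrangean obtained by relaxing constraints (a) and (d) with multipliers
`λ` (here `lam`) and `η` (here `eta`). -/
noncomputable def Lag (f : Fin n → ℝ) (M : Fin m → Fin n → Fin ℓ → Fin q → ℝ)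
    (X : Fin m → Fin n → Fin ℓ → ℝ) (Y : Fin n → ℝ) (θ : Fin ℓ → Fin q → ℝ)
    (lam : Fin n → Fin ℓ → ℝ) (eta : Fin ℓ → Fin q → ℝ) : ℝ :=
  Z f Y θ
    - ∑ j, ∑ t, lam j t * ((∑ i, X i j t) - 1)
    - ∑ t, ∑ k, eta t k * (θ t k - ∑ i, ∑ j, M i j t k * X i j t)

/-- The relaxed feasible set: binary `X, Y` with `Σ_j Y j = p` and `X i j t ≤ Y j`,
and `θ` in the box `[0,1]` (constraints (a) and (d) are dropped). -/
def Relaxed (p : ℕ) (X : Fin m → Fin n → Fin ℓ → ℝ) (Y : Fin n → ℝ)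
    (θ : Fin ℓ → Fin q → ℝ) : Prop :=
  (∀ i j t, X i j t = 0 ∨ X i j t = 1) ∧
  (∀ j, Y j = 0 ∨ Y j = 1) ∧
  (∑ j, Y j = (p : ℝ)) ∧
  (∀ i j t, X i j t ≤ Y j) ∧
  (∀ t k, θ t k ∈ Set.Icc (0 : ℝ) 1)

/-- The Lagrangean dual function `g(λ, η)`: the supremum of the Lagrangean over the
relaxed feasible set. -/
noncomputable def dualFn (p : ℕ) (M : Fin m → Fin n → Fin ℓ → Fin q → ℝ)
    (f : Fin n → ℝ) (lam : Fin n → Fin ℓ → ℝ) (eta : Fin ℓ → Fin q → ℝ) : ℝ :=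
  sSup { z : ℝ | ∃ X Y θ, Relaxed p X Y θ ∧ z = Lag f M X Y θ lam eta }

/-- Regrouping the Lagrangean by variable: each `θ t k`, each `X i j t` and each `Y j`
appears linearly with its own reduced coefficient. -/
lemma Lag_eq (f : Fin n → ℝ) (M : Fin m → Fin n → Fin ℓ → Fin q → ℝ)
    (X : Fin m → Fin n → Fin ℓ → ℝ) (Y : Fin n → ℝ) (θ : Fin ℓ → Fin q → ℝ)
    (lam : Fin n → Fin ℓ → ℝ) (eta : Fin ℓ → Fin q → ℝ) :
    Lag f M X Y θ lam eta =
      (∑ t, ∑ k, (1 - eta t k) * θ t k) + (∑ j, ∑ t, lam j t) +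
      ∑ j, ((∑ i, ∑ t, ((∑ k, eta t k * M i j t k) - lam j t) * X i j t)
        - f j / (ℓ : ℝ) * Y j) := by
  have h1 : ∑ j, ∑ t, lam j t * ((∑ i, X i j t) - 1)
      = (∑ j, ∑ i, ∑ t, lam j t * X i j t) - ∑ j, ∑ t, lam j t := by
    rw [← Finset.sum_sub_distrib]
    refine Finset.sum_congr rfl fun j _ => ?_
    rw [Finset.sum_comm, ← Finset.sum_sub_distrib]
    refine Finset.sum_congr rfl fun t _ => ?_
    rw [mul_sub, Finset.mul_sum, mul_one]
  have h2 : ∑ t, ∑ k, eta t k * (∑ i, ∑ j, M i j t k * X i j t)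
      = ∑ j, ∑ i, ∑ t, (∑ k, eta t k * M i j t k) * X i j t := by
    have e1 : ∀ t, ∑ k, eta t k * (∑ i, ∑ j, M i j t k * X i j t)
        = ∑ i, ∑ j, (∑ k, eta t k * M i j t k) * X i j t := by
      intro t
      simp only [Finset.mul_sum, Finset.sum_mul]
      rw [Finset.sum_comm]
      refine Finset.sum_congr rfl fun i _ => ?_
      rw [Finset.sum_comm]
      refine Finset.sum_congr rfl fun j _ => Finset.sum_congr rfl fun k _ => ?_
      ring
    simp only [e1]
    rw [Finset.sum_comm, Finset.sum_comm (s := (Finset.univ : Finset (Fin n)))]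
    refine Finset.sum_congr rfl fun i _ => ?_
    rw [Finset.sum_comm]
  have h3 : (1 / (ℓ : ℝ)) * ∑ j, f j * Y j = ∑ j, f j / (ℓ : ℝ) * Y j := by
    rw [Finset.mul_sum]
    refine Finset.sum_congr rfl fun j _ => ?_
    ring
  unfold Lag Z
  rw [h1, h3]
  simp only [mul_sub, sub_mul, one_mul, Finset.sum_sub_distrib]
  rw [h2]
  ring

/-- Decomposition theorem for the Lagrangean dual: for nonnegative multipliers `λ, η`,
`g(λ, η) = Σ_{t,k} max(0, 1 − η t k) + Σ_{j,t} λ j t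
  + max over subsets S ⊆ Fin n with |S| = p of
      Σ_{j ∈ S} ( Σ_{i,t} max(0, Σ_k η t k · M i j t k − λ j t) − f j / ℓ )`. -/
theorem dual_decomposition
    (m n ℓ q p : ℕ) (hm : 0 < m) (hn : 0 < n) (hℓ : 0 < ℓ) (hq : 0 < q)
    (hp1 : 1 ≤ p) (hpn : p ≤ n)
    (M : Fin m → Fin n → Fin ℓ → Fin q → ℝ)
    (hM : ∀ i j t k, M i j t k = 0 ∨ M i j t k = 1)
    (f : Fin n → ℝ)
    (lam : Fin n → Fin ℓ → ℝ) (eta : Fin ℓ → Fin q → ℝ)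
    (hlam : ∀ j t, 0 ≤ lam j t) (heta : ∀ t k, 0 ≤ eta t k) :
    dualFn p M f lam eta =
      (∑ t, ∑ k, max 0 (1 - eta t k)) + (∑ j, ∑ t, lam j t) +
      (Finset.powersetCard p (Finset.univ : Finset (Fin n))).sup'
        (Finset.powersetCard_nonempty.mpr (by simpa using hpn))
        (fun S => ∑ j ∈ S,
          ((∑ i, ∑ t, max 0 ((∑ k, eta t k * M i j t k) - lam j t)) - f j / (ℓ : ℝ))) := by
  -- Weight contributed by opening facility `j` and choosing its pointings optimally.
  set w : Fin n → ℝ := fun j =>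
    (∑ i, ∑ t, max 0 ((∑ k, eta t k * M i j t k) - lam j t)) - f j / (ℓ : ℝ) with hw
  have hne : (Finset.powersetCard p (Finset.univ : Finset (Fin n))).Nonempty :=
    Finset.powersetCard_nonempty.mpr (by simpa using hpn)
  refine IsGreatest.csSup_eq ⟨?_, ?_⟩
  · obtain ⟨S, hS, hSmax⟩ := Finset.exists_mem_eq_sup' hne (fun S => ∑ j ∈ S, w j)
    rw [Finset.mem_powersetCard] at hS
    refine ⟨fun i j t => if j ∈ S ∧ 0 ≤ (∑ k, eta t k * M i j t k) - lam j t then 1 else 0,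
      fun j => if j ∈ S then 1 else 0, fun t k => if 0 ≤ 1 - eta t k then 1 else 0,
      ⟨?_, ?_, ?_, ?_, ?_⟩, ?_⟩
    · intro i j t
      dsimp only
      split_ifs <;> simp
    · intro j
      dsimp only
      split_ifs <;> simp
    · simp [hS.2]
    · intro i j t
      by_cases hj : j ∈ S
      · simp only [hj, true_and, if_true]
        split_ifs <;> norm_num
      · simp [hj]
    · intro t k
      dsimp only
      split_ifs <;> simp
    · rw [Lag_eq, hSmax]
      congr 1
      · congr 1
        refine Finset.sum_congr rfl fun t _ => Finset.sum_congr rfl fun k _ => ?_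
        split_ifs with h
        · rw [max_eq_right h, mul_one]
        · rw [max_eq_left (not_le.mp h).le, mul_zero]
      · rw [← Finset.sum_filter_add_sum_filter_not Finset.univ (· ∈ S)]
        rw [Finset.sum_eq_zero (s := Finset.univ.filter (· ∉ S)), add_zero,
          Finset.filter_univ_mem]
        · refine Finset.sum_congr rfl fun j hj => ?_
          simp only [hw, hj, true_and, if_true, mul_one]
          congr 1
          refine Finset.sum_congr rfl fun i _ => Finset.sum_congr rfl fun t _ => ?_
          split_ifs with h
          · rw [max_eq_right h, mul_one]
          · rw [max_eq_left (not_le.mp h).le, mul_zero]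
        · intro j hj
          simp [(Finset.mem_filter.mp hj).2]
  · rintro z ⟨X, Y, θ, ⟨hX, hY, hYp, hXY, hθ⟩, rfl⟩
    rw [Lag_eq]
    have hmul : ∀ c x : ℝ, 0 ≤ x → x ≤ 1 → c * x ≤ max 0 c := by
      intro c x h0 h1
      calc c * x ≤ max 0 c * x := mul_le_mul_of_nonneg_right (le_max_right _ _) h0
        _ ≤ max 0 c := mul_le_of_le_one_right (le_max_left _ _) h1
    have hYif : ∀ j, Y j = if Y j = 1 then 1 else 0 := by
      intro j
      rcases hY j with h | h <;> simp [h]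
    have hcard : (Finset.univ.filter fun j => Y j = 1).card = p := by
      have h := hYp
      rw [Finset.sum_congr rfl fun j _ => hYif j, Finset.sum_boole] at h
      exact_mod_cast h
    gcongr ?_ + _ + ?_
    · refine Finset.sum_le_sum fun t _ => Finset.sum_le_sum fun k _ => ?_
      exact hmul _ _ (hθ t k).1 (hθ t k).2
    · refine le_trans ?_ (Finset.le_sup' (fun S => ∑ j ∈ S, w j)
        (Finset.mem_powersetCard.mpr ⟨Finset.subset_univ _, hcard⟩))
      rw [Finset.sum_filter]
      refine Finset.sum_le_sum fun j _ => ?_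
      rcases hY j with h | h
      -- A closed facility forces all its pointings to vanish.
      · have hX0 : ∀ i t, X i j t = 0 := by
          intro i t
          rcases hX i j t with h' | h'
          · exact h'
          · have := hXY i j t
            rw [h, h'] at this
            norm_num at this
        simp [h, hX0]
      · rw [if_pos h, h, mul_one]
        refine sub_le_sub_right (Finset.sum_le_sum fun i _ =>
          Finset.sum_le_sum fun t _ => ?_) _
        refine hmul _ _ ?_ ?_ <;> rcases hX i j t with h' | h' <;> norm_num [h']

end TEpMP
end

section
/- Explicit computable upper bound on the optimal coverage: for every λ : Fin n → Fin ℓ → ℝ≥0 and η : Fin ℓ → Fin q → ℝ≥0, the optimal value of the slack-form TE-p-MP satisfies Z* ≤ Σ_{t,k} max(0, 1 − η t k) + Σ_{j,t} λ j t + max over subsets S ⊆ Fin n with |S| = p of Σ_{j ∈ S} ( Σ_{i,t} max(0, Σ_k η t k · M i j t k − λ j t) − f j / ℓ ). -/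
/-!
The bound is weak Lagrangian duality. For a feasible triple, the covering constraint (d) is
priced with `eta` and the one-direction constraint (a) with `lam`. Since `θ t k ∈ [0, 1]`, the
`θ`-part of the Lagrangian is at most `∑ max 0 (1 - eta)`. Since `0 ≤ X i j t ≤ Y j`, the
`X`-part is at most `Y j` times the positive part of its coefficient (`sum_slack_le`). What is
left is linear in the binary vector `Y`, which is the indicator of a set of `p` locations
(`exists_support`), so it is bounded by the maximum over such sets.
-/

open Finset

namespace TEpMP

variable {m n ℓ q : ℕ}

/-- Relaxing (d) with multipliers `eta` and (a) with multipliers `lam`, then bounding each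
`X i j t` by `Y j`, bounds the total slack by a function of `Y` alone. -/
theorem sum_slack_le {p : ℕ} {M : Fin m → Fin n → Fin ℓ → Fin q → ℝ}
    {X : Fin m → Fin n → Fin ℓ → ℝ} {Y : Fin n → ℝ} {θ : Fin ℓ → Fin q → ℝ}
    (h : Feasible p M X Y θ)
    (lam : Fin n → Fin ℓ → ℝ) (eta : Fin ℓ → Fin q → ℝ)
    (hlam : ∀ j t, 0 ≤ lam j t) (heta : ∀ t k, 0 ≤ eta t k) :
    ∑ t, ∑ k, θ t k ≤
      (∑ t, ∑ k, max 0 (1 - eta t k)) + (∑ j, ∑ t, lam j t) +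
      ∑ j, Y j * ∑ i, ∑ t, max 0 ((∑ k, eta t k * M i j t k) - lam j t) := by
  obtain ⟨⟨hX, -, hXsum, -, hXY⟩, hθ, hcov⟩ := h
  have hslack : ∑ t, ∑ k, θ t k ≤ (∑ t, ∑ k, max 0 (1 - eta t k)) +
      ∑ t, ∑ k, eta t k * ∑ i, ∑ j, M i j t k * X i j t := by
    simp only [← sum_add_distrib]
    refine sum_le_sum fun t _ => sum_le_sum fun k _ => ?_
    -- `θ = θ (1 - η) + η θ`, where `θ ∈ [0, 1]` and `θ` is at most the coverage.
    have h1 := mul_le_mul_of_nonneg_left (hcov t k) (heta t k)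
    have h2 : θ t k * (1 - eta t k) ≤ max 0 (1 - eta t k) :=
      (mul_le_mul_of_nonneg_left (le_max_right 0 _) (hθ t k).1).trans
        (mul_le_of_le_one_left (le_max_left _ _) (hθ t k).2)
    linarith
  have hswap : ∑ t, ∑ k, eta t k * ∑ i, ∑ j, M i j t k * X i j t =
      ∑ j, ∑ t, ∑ i, X i j t * ∑ k, eta t k * M i j t k := by
    rw [sum_comm (s := (univ : Finset (Fin n)))]
    refine sum_congr rfl fun t _ => ?_
    simp only [mul_sum]
    rw [sum_comm, sum_comm (s := (univ : Finset (Fin n)))]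
    refine sum_congr rfl fun i _ => ?_
    rw [sum_comm]
    exact sum_congr rfl fun j _ => sum_congr rfl fun k _ => by ring
  have hcover : ∑ j, ∑ t, ∑ i, X i j t * ∑ k, eta t k * M i j t k ≤
      (∑ j, ∑ t, lam j t) +
      ∑ j, Y j * ∑ i, ∑ t, max 0 ((∑ k, eta t k * M i j t k) - lam j t) := by
    rw [← sum_add_distrib]
    refine sum_le_sum fun j _ => ?_
    rw [sum_comm (s := (univ : Finset (Fin m))), mul_sum, ← sum_add_distrib]
    refine sum_le_sum fun t _ => ?_
    have h1 : lam j t * ∑ i, X i j t ≤ lam j t :=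
      mul_le_of_le_one_right (hlam j t) (hXsum j t)
    have h2 : ∑ i, X i j t * ∑ k, eta t k * M i j t k ≤ lam j t * ∑ i, X i j t +
        Y j * ∑ i, max 0 ((∑ k, eta t k * M i j t k) - lam j t) := by
      rw [mul_sum, mul_sum, ← sum_add_distrib]
      refine sum_le_sum fun i _ => ?_
      have h0 : 0 ≤ X i j t := by rcases hX i j t with h | h <;> simp [h]
      have h3 := mul_le_mul_of_nonneg_left
        (le_max_right 0 ((∑ k, eta t k * M i j t k) - lam j t)) h0
      have h4 := mul_le_mul_of_nonneg_right (hXY i j t)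
        (le_max_left 0 ((∑ k, eta t k * M i j t k) - lam j t))
      linarith
    linarith
  linarith

/-- A `0`-`1` vector with coordinate sum `p` is the indicator of a `p`-element set. -/
theorem exists_support {p : ℕ} {Y : Fin n → ℝ} (hY : ∀ j, Y j = 0 ∨ Y j = 1)
    (hsum : ∑ j, Y j = (p : ℝ)) :
    ∃ S ∈ powersetCard p (univ : Finset (Fin n)), ∀ j, Y j = if j ∈ S then 1 else 0 := by
  have hind : ∀ j, Y j = if j ∈ univ.filter (fun j => Y j = 1) then 1 else 0 := by
    intro j
    rcases hY j with h | h <;> simp [h]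
  refine ⟨univ.filter (fun j => Y j = 1), ?_, hind⟩
  rw [mem_powersetCard]
  refine ⟨subset_univ _, ?_⟩
  rw [sum_congr rfl fun j _ => hind j] at hsum
  simpa only [sum_ite_mem, univ_inter, sum_const, nsmul_eq_mul, mul_one, Nat.cast_inj] using hsum

/-- Locating any `p` facilities and observing nothing is feasible, so that `Zstar` is a
supremum over a nonempty set rather than the default value of `sSup ∅`. -/
theorem exists_feasible {p : ℕ} (hpn : p ≤ n) (M : Fin m → Fin n → Fin ℓ → Fin q → ℝ) :
    ∃ X Y θ, Feasible p M X Y θ := by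
  obtain ⟨S, -, hS⟩ := exists_subset_card_eq (s := (univ : Finset (Fin n))) (n := p)
    (by simpa using hpn)
  refine ⟨fun _ _ _ => 0, fun j => if j ∈ S then 1 else 0, fun _ _ => 0,
    ⟨fun _ _ _ => Or.inl rfl, fun j => ?_, fun _ _ => by simp, by simp [hS], fun _ j _ => ?_⟩,
    fun _ _ => by simp, fun _ _ => by simp⟩
  · by_cases h : j ∈ S <;> simp [h]
  · by_cases h : j ∈ S <;> simp [h]

/-- Explicit computable upper bound on the optimal coverage: for every nonnegative
`λ, η`, the optimal value of the slack-form TE-p-MP satisfies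
`Z* ≤ Σ_{t,k} max(0, 1 − η t k) + Σ_{j,t} λ j t
  + max over subsets S ⊆ Fin n with |S| = p of
      Σ_{j ∈ S} ( Σ_{i,t} max(0, Σ_k η t k · M i j t k − λ j t) − f j / ℓ )`. -/
theorem explicit_upper_bound
    (m n ℓ q p : ℕ) (hm : 0 < m) (hn : 0 < n) (hℓ : 0 < ℓ) (hq : 0 < q)
    (hp1 : 1 ≤ p) (hpn : p ≤ n)
    (M : Fin m → Fin n → Fin ℓ → Fin q → ℝ)
    (hM : ∀ i j t k, M i j t k = 0 ∨ M i j t k = 1)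
    (f : Fin n → ℝ)
    (lam : Fin n → Fin ℓ → ℝ) (eta : Fin ℓ → Fin q → ℝ)
    (hlam : ∀ j t, 0 ≤ lam j t) (heta : ∀ t k, 0 ≤ eta t k) :
    Zstar p M f ≤
      (∑ t, ∑ k, max 0 (1 - eta t k)) + (∑ j, ∑ t, lam j t) +
      (Finset.powersetCard p (Finset.univ : Finset (Fin n))).sup'
        (Finset.powersetCard_nonempty.mpr (by simpa using hpn))
        (fun S => ∑ j ∈ S,
          ((∑ i, ∑ t, max 0 ((∑ k, eta t k * M i j t k) - lam j t)) - f j / (ℓ : ℝ))) := by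
  refine csSup_le ?_ ?_
  · obtain ⟨X, Y, θ, h⟩ := exists_feasible hpn M
    exact ⟨_, X, Y, θ, h, rfl⟩
  · rintro z ⟨X, Y, θ, h, rfl⟩
    have hslack := sum_slack_le h lam eta hlam heta
    obtain ⟨S, hS, hYS⟩ := exists_support h.1.2.1 h.1.2.2.2.1
    have hsup := le_sup' (fun S => ∑ j ∈ S,
      ((∑ i, ∑ t, max 0 ((∑ k, eta t k * M i j t k) - lam j t)) - f j / (ℓ : ℝ))) hS
    have hvalue : ∑ j ∈ S,
        ((∑ i, ∑ t, max 0 ((∑ k, eta t k * M i j t k) - lam j t)) - f j / (ℓ : ℝ)) =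
        (∑ j, Y j * ∑ i, ∑ t, max 0 ((∑ k, eta t k * M i j t k) - lam j t)) -
          (1 / (ℓ : ℝ)) * ∑ j, f j * Y j := by
      rw [mul_sum, ← sum_sub_distrib, ← univ_inter S, ← sum_ite_mem]
      refine sum_congr rfl fun j _ => ?_
      rw [hYS j]
      split_ifs <;> ring
    unfold Z
    linarith

end TEpMP
end
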